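/- arXiv:2310.09287 — 2 statements merged into one kernel-verified Lean document; each statement's English description precedes it below -/
import Mathlib

section
/- If S is a MANS-semigroup with embedding dimension e(S) = 3, then there exist natural numbers m, a, b, t with m ≥ 3, a ≥ 1, t ∈ {2, …, m−1}, (t−1)(am+1) < bm+t < t(am+1), such that the three minimal generators of S are (m(S), r(S), M(S)) = (m, am+1, bm+t). -/
/-- `S ⊆ ℕ` is a numerical semigroup: contains `0`, closed under addition,
and has finite complement in `ℕ`. -/
def IsNumSgp (S : Set ℕ) : Prop :=
  0 ∈ S ∧ (∀ a ∈ S, ∀ b ∈ S, a + b ∈ S) ∧ Sᶜ.Finite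

/-- `⟨A⟩`: the additive submonoid of `ℕ` generated by `A`, viewed as a set. -/
def gen (A : Set ℕ) : Set ℕ := (AddSubmonoid.closure A : Set ℕ)

/-- The multiplicity `m(S)`: the least nonzero element of `S`. -/
noncomputable def nsMult (S : Set ℕ) : ℕ := sInf {x | x ∈ S ∧ x ≠ 0}

/-- The minimal system of generators of `S`: the nonzero elements of `S` that are
not a sum of two nonzero elements of `S`. -/
def msg (S : Set ℕ) : Set ℕ :=
  {x | x ∈ S ∧ x ≠ 0 ∧ ∀ a ∈ S, a ≠ 0 → ∀ b ∈ S, b ≠ 0 → x ≠ a + b}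

/-- The ratio `r(S)`: the second smallest minimal generator of `S`. -/
noncomputable def nsRatio (S : Set ℕ) : ℕ := sInf (msg S \ {nsMult S})

/-- The maximum minimal generator `M(S)`. -/
noncomputable def nsMaxGen (S : Set ℕ) : ℕ := sSup (msg S)

/-- The Apéry set `Ap(S, n) = {s ∈ S : s - n ∉ S}`. -/
def AperySet (S : Set ℕ) (n : ℕ) : Set ℕ :=
  {s | s ∈ S ∧ ¬ ∃ y ∈ S, y + n = s}

/-- `w(i)`: the least element of `S` congruent to `i` modulo `n`. -/
noncomputable def aperyW (S : Set ℕ) (n i : ℕ) : ℕ :=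
  sInf {s | s ∈ S ∧ s % n = i % n}

/-- A MANS-semigroup: a numerical semigroup whose Apéry set with respect to the
multiplicity is monotone, i.e. `w(1) < w(2) < ⋯ < w(m(S) - 1)`. -/
def IsMANS (S : Set ℕ) : Prop :=
  IsNumSgp S ∧ ∀ i : ℕ, 0 < i → i + 1 < nsMult S →
    aperyW S (nsMult S) i < aperyW S (nsMult S) (i + 1)

/-- The Frobenius number `F(S)`: the greatest integer not in `S`. -/
noncomputable def nsFrob (S : Set ℕ) : ℕ := sSup {x | x ∉ S}

/-- The genus `g(S)`: the number of gaps of `S`. -/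
noncomputable def nsGenus (S : Set ℕ) : ℕ := Set.ncard {x | x ∉ S}

/-- The set of pseudo-Frobenius numbers of `S`: integers `x ∉ S` such that
`x + s ∈ S` for every nonzero `s ∈ S`. -/
def nsPF (S : Set ℕ) : Set ℤ :=
  {x : ℤ | x ∉ ((Nat.cast : ℕ → ℤ) '' S) ∧
    ∀ s ∈ S, s ≠ 0 → x + (s : ℤ) ∈ ((Nat.cast : ℕ → ℤ) '' S)}

/-- The type `t(S)`: the number of pseudo-Frobenius numbers of `S`. -/
noncomputable def nsType (S : Set ℕ) : ℕ := (nsPF S).ncard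

/-- `S` is pseudo-symmetric iff `F(S) = 2 g(S) - 2`. -/
def IsPseudoSymmetric (S : Set ℕ) : Prop :=
  (nsFrob S : ℤ) = 2 * (nsGenus S : ℤ) - 2

/-!
Put `m = m(S)`, `r = r(S)`, `M = M(S)`. Every minimal generator `g ≠ m` lies in `Ap(S, m)`, hence is
the value of `w` at its residue modulo `m`. The least nonzero value of `w` is `r`, so monotonicity
gives `w(1) = r`, that is `r ≡ 1` modulo `m`. For the residue `t` of `M`, the multiple `t r ∈ S` is
congruent to `M` and is not a minimal generator, so `M < t r`. Conversely `w(t - 1) < w(t) = M` is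
generated by `m` and `r` alone, and reaching the residue `t - 1` takes at least `t - 1` copies of
`r`, so `(t - 1) r ≤ w(t - 1) < M`.
-/

section

variable {S : Set ℕ} {g i k m n r s x : ℕ}

theorem nsMult_le (hx : x ∈ S) (hx0 : x ≠ 0) : nsMult S ≤ x :=
  Nat.sInf_le ⟨hx, hx0⟩

theorem nsMult_mem_msg (hS : (msg S).Nonempty) : nsMult S ∈ msg S := by
  obtain ⟨hmem, hne⟩ : nsMult S ∈ {x | x ∈ S ∧ x ≠ 0} :=
    Nat.sInf_mem (hS.mono fun _ hx ↦ ⟨hx.1, hx.2.1⟩)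
  refine ⟨hmem, hne, fun a ha ha0 b _ hb0 heq ↦ ?_⟩
  have : nsMult S ≤ a := nsMult_le ha ha0
  omega

theorem mem_gen_msg_inter_Iic (hx : x ∈ S) : x ∈ gen (msg S ∩ Set.Iic x) := by
  induction x using Nat.strong_induction_on with
  | _ x ih =>
    by_cases hmsg : x ∈ msg S
    · exact AddSubmonoid.subset_closure ⟨hmsg, Set.self_mem_Iic⟩
    rcases eq_or_ne x 0 with rfl | hx0
    · exact zero_mem (AddSubmonoid.closure _)
    obtain ⟨a, ha, ha0, b, hb, hb0, rfl⟩ : ∃ a ∈ S, a ≠ 0 ∧ ∃ b ∈ S, b ≠ 0 ∧ x = a + b := by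
      by_contra! hirred
      exact hmsg ⟨hx, hx0, hirred⟩
    have gen_mono {c : ℕ} (hc : c ≤ a + b) :
        gen (msg S ∩ Set.Iic c) ⊆ gen (msg S ∩ Set.Iic (a + b)) :=
      AddSubmonoid.closure_mono (Set.inter_subset_inter_right _ (Set.Iic_subset_Iic.2 hc))
    exact add_mem (S := AddSubmonoid ℕ) (gen_mono (by omega) (ih a (by omega) ha))
      (gen_mono (by omega) (ih b (by omega) hb))

theorem nsRatio_mem (hS : (msg S).Nontrivial) : nsRatio S ∈ msg S \ {nsMult S} :=
  Nat.sInf_mem (hS.exists_ne (nsMult S))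

theorem nsRatio_le_of_mem_msg (hg : g ∈ msg S) (hgm : g ≠ nsMult S) : nsRatio S ≤ g :=
  Nat.sInf_le ⟨hg, hgm⟩

theorem nsRatio_le_of_not_dvd (hx : x ∈ S) (hdvd : ¬ nsMult S ∣ x) : nsRatio S ≤ x := by
  by_contra! hlt
  have hgens : msg S ∩ Set.Iic x ⊆ {nsMult S} := fun g ⟨hg, hgx⟩ ↦ by
    by_contra hgm
    exact ((nsRatio_le_of_mem_msg hg hgm).trans hgx).not_gt hlt
  obtain ⟨k, rfl⟩ := AddSubmonoid.mem_closure_singleton.1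
    (AddSubmonoid.closure_mono hgens (mem_gen_msg_inter_Iic hx))
  exact hdvd (Dvd.intro_left k rfl)

theorem nsRatio_lt_nsMaxGen (hS : 2 < (msg S).ncard) : nsRatio S < nsMaxGen S := by
  have hbdd : BddAbove (msg S) := (Set.finite_of_ncard_pos (by omega)).bddAbove
  by_contra! hle
  have hsub : msg S ⊆ {nsMult S, nsRatio S} := fun g hg ↦
    or_iff_not_imp_left.2 fun hgm ↦
      ((le_csSup hbdd hg).trans hle).antisymm (nsRatio_le_of_mem_msg hg hgm)
  have hcard : ({nsMult S, nsRatio S} : Set ℕ).ncard ≤ 2 := by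
    simpa only [Set.ncard_singleton] using Set.ncard_insert_le (nsMult S) {nsRatio S}
  exact hS.not_ge ((Set.ncard_le_ncard hsub).trans hcard)

theorem nontrivial_msg_of_two_lt_ncard (hS : 2 < (msg S).ncard) : (msg S).Nontrivial :=
  (Set.one_lt_ncard_iff_nontrivial_and_finite.1 (by omega)).1

theorem nsMult_lt_nsRatio (hS : (msg S).Nontrivial) : nsMult S < nsRatio S :=
  let ⟨hr, hrm⟩ := nsRatio_mem hS
  (nsMult_le hr.1 hr.2.1).lt_of_ne' hrm

theorem nsMaxGen_mem (hS : 2 < (msg S).ncard) :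
    nsMaxGen S ∈ msg S ∧ nsMaxGen S ≠ nsMult S ∧ nsMaxGen S ≠ nsRatio S := by
  have hnt := nontrivial_msg_of_two_lt_ncard hS
  have hbdd : BddAbove (msg S) := (Set.finite_of_ncard_pos (by omega)).bddAbove
  have hmr := nsMult_lt_nsRatio hnt
  have hrM := nsRatio_lt_nsMaxGen hS
  exact ⟨Nat.sSup_mem hnt.nonempty hbdd, (hmr.trans hrM).ne', hrM.ne'⟩

theorem msg_eq_of_ncard_eq_three (he : (msg S).ncard = 3) :
    msg S = {nsMult S, nsRatio S, nsMaxGen S} := by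
  have hnt := nontrivial_msg_of_two_lt_ncard (S := S) (by omega)
  have hm := nsMult_mem_msg hnt.nonempty
  have hr := nsRatio_mem hnt
  obtain ⟨hM, hMm, hMr⟩ := nsMaxGen_mem (S := S) (by omega)
  have hcard : ({nsMult S, nsRatio S, nsMaxGen S} : Set ℕ).ncard = 3 :=
    Set.ncard_eq_three.2 ⟨_, _, _, (nsMult_lt_nsRatio hnt).ne, hMm.symm, hMr.symm, rfl⟩
  refine (Set.eq_of_subset_of_ncard_le ?_ (by omega) (Set.finite_of_ncard_pos (by omega))).symm
  rintro _ (rfl | rfl | rfl)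
  exacts [hm, hr.1, hM]

theorem mem_gen_pair_of_lt_nsMaxGen (he : (msg S).ncard = 3) (hx : x ∈ S)
    (hlt : x < nsMaxGen S) : x ∈ gen {nsMult S, nsRatio S} := by
  have hgens : msg S ∩ Set.Iic x ⊆ {nsMult S, nsRatio S} := by
    rw [msg_eq_of_ncard_eq_three he]
    rintro g ⟨rfl | rfl | rfl, hgx⟩
    exacts [.inl rfl, .inr rfl, absurd hlt (not_lt_of_ge hgx)]
  exact AddSubmonoid.closure_mono hgens (mem_gen_msg_inter_Iic hx)

theorem mod_mul_le_of_mem_gen_pair (hr : r ≡ 1 [MOD m]) (hx : x ∈ gen {m, r}) :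
    x % m * r ≤ x := by
  obtain ⟨a, b, rfl⟩ := (AddSubmonoid.mem_closure_pair ..).1 hx
  simp only [smul_eq_mul]
  have hmod : a * m + b * r ≡ b [MOD m] := by
    simpa using ((Nat.modEq_zero_iff_dvd.2 (dvd_mul_left m a)).add (hr.mul_left b))
  calc (a * m + b * r) % m * r = b % m * r := by rw [hmod]
    _ ≤ b * r := Nat.mul_le_mul_right r (Nat.mod_le b m)
    _ ≤ a * m + b * r := Nat.le_add_left _ _

theorem aperyW_mod (S : Set ℕ) (n i : ℕ) : aperyW S n (i % n) = aperyW S n i := by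
  simp only [aperyW, Nat.mod_mod]

theorem aperyW_le (hs : s ∈ S) (hsi : s ≡ i [MOD n]) : aperyW S n i ≤ s :=
  Nat.sInf_le ⟨hs, hsi⟩

theorem aperyW_spec (h : ∃ s ∈ S, s ≡ i [MOD n]) :
    aperyW S n i ∈ S ∧ aperyW S n i ≡ i [MOD n] :=
  Nat.sInf_mem h

theorem mem_aperySet_of_mem_msg (hg : g ∈ msg S) (hn : n ∈ S) (hn0 : n ≠ 0) (hgn : g ≠ n) :
    g ∈ AperySet S n := by
  refine ⟨hg.1, fun ⟨y, hy, hyg⟩ ↦ ?_⟩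
  have hy0 : y ≠ 0 := by omega
  exact hg.2.2 y hy hy0 n hn hn0 hyg.symm

namespace IsNumSgp

theorem mul_mem (hS : IsNumSgp S) (k : ℕ) (hx : x ∈ S) : k * x ∈ S := by
  induction k with
  | zero => simpa only [zero_mul] using hS.1
  | succ k ih => simpa only [Nat.succ_mul] using hS.2.1 _ ih _ hx

theorem mul_notMem_msg (hS : IsNumSgp S) (hx : x ∈ S) (hk : 2 ≤ k) : k * x ∉ msg S := by
  obtain ⟨j, rfl⟩ := Nat.exists_eq_add_of_le' hk
  rintro ⟨-, hne, hirred⟩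
  have hx0 : x ≠ 0 := right_ne_zero_of_mul hne
  exact hirred ((j + 1) * x) (hS.mul_mem _ hx) (mul_ne_zero j.succ_ne_zero hx0) x hx hx0 (by ring)

theorem exists_mem_modEq (hS : IsNumSgp S) (hn : n ≠ 0) (i : ℕ) : ∃ s ∈ S, s ≡ i [MOD n] := by
  obtain ⟨N, hN⟩ := hS.2.2.bddAbove
  refine ⟨i + n * (N + 1), ?_, by simp [Nat.ModEq]⟩
  by_contra hgap
  have hle : i + n * (N + 1) ≤ N := hN hgap
  have hlt : N + 1 ≤ n * (N + 1) := Nat.le_mul_of_pos_left _ (Nat.pos_of_ne_zero hn)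
  omega

theorem aperyW_eq_self (hS : IsNumSgp S) (hn : n ∈ S) (hs : s ∈ AperySet S n) :
    aperyW S n s = s := by
  obtain ⟨hsS, hsn⟩ := hs
  obtain ⟨hwS, hws⟩ := aperyW_spec ⟨s, hsS, Nat.ModEq.refl (n := n) s⟩
  obtain ⟨k, hk⟩ := (Nat.modEq_iff_exists_eq_add (aperyW_le hsS rfl)).1 hws
  cases k with
  | zero => simpa using hk.symm
  | succ k =>
    refine (hsn ⟨aperyW S n s + k * n, hS.2.1 _ hwS _ (hS.mul_mem k hn), ?_⟩).elim
    linarith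

theorem not_dvd_of_mem_aperySet (hS : IsNumSgp S) (hn : n ∈ S) (hs : s ∈ AperySet S n)
    (hs0 : s ≠ 0) : ¬ n ∣ s := fun hdvd ↦ by
  have hle : aperyW S n s ≤ 0 := aperyW_le hS.1 (Nat.modEq_zero_iff_dvd.2 hdvd).symm
  rw [hS.aperyW_eq_self hn hs] at hle
  exact hs0 (Nat.le_zero.1 hle)

theorem aperyW_nsMult_mod_eq_self (hS : IsNumSgp S) (hg : g ∈ msg S) (hgm : g ≠ nsMult S) :
    aperyW S (nsMult S) (g % nsMult S) = g := by
  have hm := nsMult_mem_msg ⟨g, hg⟩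
  rw [aperyW_mod]
  exact hS.aperyW_eq_self hm.1 (mem_aperySet_of_mem_msg hg hm.1 hm.2.1 hgm)

theorem mod_nsMult_mem_Ioo (hS : IsNumSgp S) (hg : g ∈ msg S) (hgm : g ≠ nsMult S) :
    g % nsMult S ∈ Set.Ioo 0 (nsMult S) := by
  have hm := nsMult_mem_msg ⟨g, hg⟩
  have hdvd : ¬ nsMult S ∣ g := hS.not_dvd_of_mem_aperySet hm.1
    (mem_aperySet_of_mem_msg hg hm.1 hm.2.1 hgm) hg.2.1
  exact ⟨Nat.emod_pos_of_not_dvd hdvd, Nat.mod_lt g (Nat.pos_of_ne_zero hm.2.1)⟩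

end IsNumSgp

namespace IsMANS

theorem strictMonoOn_aperyW (hS : IsMANS S) :
    StrictMonoOn (aperyW S (nsMult S)) (Set.Ioo 0 (nsMult S)) :=
  strictMonoOn_of_lt_add_one Set.ordConnected_Ioo fun i _ hi hi' ↦ hS.2 i hi.1 hi'.2

theorem aperyW_one (hS : IsMANS S) (hnt : (msg S).Nontrivial) :
    aperyW S (nsMult S) 1 = nsRatio S := by
  obtain ⟨hr, hrm⟩ := nsRatio_mem hnt
  obtain ⟨hpos, hlt⟩ := hS.1.mod_nsMult_mem_Ioo hr hrm
  have hm : 1 < nsMult S := by omega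
  obtain ⟨hwS, hw⟩ := aperyW_spec (hS.1.exists_mem_modEq (n := nsMult S) (by omega) 1)
  apply le_antisymm
  · calc aperyW S (nsMult S) 1
        ≤ aperyW S (nsMult S) (nsRatio S % nsMult S) :=
          hS.strictMonoOn_aperyW.monotoneOn ⟨one_pos, hm⟩ ⟨hpos, hlt⟩ hpos
      _ = nsRatio S := hS.1.aperyW_nsMult_mod_eq_self hr hrm
  · refine nsRatio_le_of_not_dvd hwS fun hdvd ↦ ?_
    exact Nat.not_dvd_of_pos_of_lt one_pos hm ((hw.dvd_iff dvd_rfl).1 hdvd)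

theorem nsRatio_modEq_one (hS : IsMANS S) (hnt : (msg S).Nontrivial) :
    nsRatio S ≡ 1 [MOD nsMult S] := by
  have hm := nsMult_mem_msg hnt.nonempty
  rw [← hS.aperyW_one hnt]
  exact (aperyW_spec (hS.1.exists_mem_modEq hm.2.1 1)).2

theorem two_le_mod_nsMult (hS : IsMANS S) (hg : g ∈ msg S) (hgm : g ≠ nsMult S)
    (hgr : g ≠ nsRatio S) : 2 ≤ g % nsMult S := by
  have hm := nsMult_mem_msg ⟨g, hg⟩
  have hpos : 0 < g % nsMult S := (hS.1.mod_nsMult_mem_Ioo hg hgm).1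
  have hne : g % nsMult S ≠ 1 := fun h ↦ hgr <| by
    rw [← hS.1.aperyW_nsMult_mod_eq_self hg hgm, h, hS.aperyW_one ⟨g, hg, _, hm, hgm⟩]
  omega

theorem lt_mod_mul_nsRatio (hS : IsMANS S) (hg : g ∈ msg S) (hgm : g ≠ nsMult S)
    (hgr : g ≠ nsRatio S) : g < g % nsMult S * nsRatio S := by
  have hnt : (msg S).Nontrivial := ⟨g, hg, _, nsMult_mem_msg ⟨g, hg⟩, hgm⟩
  have hr := (nsRatio_mem hnt).1
  set t := g % nsMult S
  have htr : t * nsRatio S ≡ t [MOD nsMult S] := by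
    simpa only [mul_one] using (hS.nsRatio_modEq_one hnt).mul_left t
  have hle : g ≤ t * nsRatio S := by
    rw [← hS.1.aperyW_nsMult_mod_eq_self hg hgm]
    exact aperyW_le (hS.1.mul_mem t hr.1) htr
  refine hle.lt_of_ne fun heq ↦ ?_
  exact hS.1.mul_notMem_msg hr.1 (hS.two_le_mod_nsMult hg hgm hgr) (heq ▸ hg)

theorem pred_mod_mul_nsRatio_lt_nsMaxGen (hS : IsMANS S) (he : (msg S).ncard = 3) :
    (nsMaxGen S % nsMult S - 1) * nsRatio S < nsMaxGen S := by
  obtain ⟨hM, hMm, hMr⟩ := nsMaxGen_mem (S := S) (by omega)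
  have hm := nsMult_mem_msg ⟨_, hM⟩
  have ht := hS.1.mod_nsMult_mem_Ioo hM hMm
  have ht2 := hS.two_le_mod_nsMult hM hMm hMr
  have hMw := hS.1.aperyW_nsMult_mod_eq_self hM hMm
  set t := nsMaxGen S % nsMult S
  have ht' : t - 1 ∈ Set.Ioo 0 (nsMult S) := ⟨by omega, by have := ht.2; omega⟩
  obtain ⟨hwS, hwt⟩ := aperyW_spec (hS.1.exists_mem_modEq hm.2.1 (t - 1))
  set w := aperyW S (nsMult S) (t - 1)
  have hwM : w < nsMaxGen S := by
    rw [← hMw]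
    exact hS.strictMonoOn_aperyW ht' ht (by omega)
  have hr := hS.nsRatio_modEq_one (nontrivial_msg_of_two_lt_ncard (by omega))
  calc (t - 1) * nsRatio S = w % nsMult S * nsRatio S := by rw [hwt, Nat.mod_eq_of_lt ht'.2]
    _ ≤ w := mod_mul_le_of_mem_gen_pair hr (mem_gen_pair_of_lt_nsMaxGen he hwS hwM)
    _ < nsMaxGen S := hwM

end IsMANS

end

theorem stmt3 (S : Set ℕ) (hM : IsMANS S) (he : (msg S).ncard = 3) :
    ∃ m a b t : ℕ, 3 ≤ m ∧ 1 ≤ a ∧ 2 ≤ t ∧ t ≤ m - 1 ∧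
      (t - 1) * (a * m + 1) < b * m + t ∧ b * m + t < t * (a * m + 1) ∧
      nsMult S = m ∧ nsRatio S = a * m + 1 ∧ nsMaxGen S = b * m + t := by
  have hnt := nontrivial_msg_of_two_lt_ncard (S := S) (by omega)
  obtain ⟨hmax, hmax_m, hmax_r⟩ := nsMaxGen_mem (S := S) (by omega)
  have ht2 := hM.two_le_mod_nsMult hmax hmax_m hmax_r
  have htm := (hM.1.mod_nsMult_mem_Ioo hmax hmax_m).2
  have hr1 : nsRatio S % nsMult S = 1 := by
    rw [hM.nsRatio_modEq_one hnt, Nat.mod_eq_of_lt (by omega)]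
  have hr : nsRatio S / nsMult S * nsMult S + 1 = nsRatio S := by
    rw [← hr1, Nat.div_add_mod']
  have ha : 1 ≤ nsRatio S / nsMult S :=
    Nat.div_pos (nsMult_lt_nsRatio hnt).le (by omega)
  refine ⟨nsMult S, nsRatio S / nsMult S, nsMaxGen S / nsMult S, nsMaxGen S % nsMult S,
    by omega, ha, ht2, by omega, ?_, ?_, rfl, hr.symm, (Nat.div_add_mod' _ _).symm⟩
  all_goals rw [hr, Nat.div_add_mod']
  · exact hM.pred_mod_mul_nsRatio_lt_nsMaxGen he
  · exact hM.lt_mod_mul_nsRatio hmax hmax_m hmax_r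
end

section
/- Let S = ⟨m, am+1, bm+t⟩ be a MANS-semigroup with embedding dimension 3, where m ≥ 3, a ≥ 1, t ∈ {2, …, m−1}, and (t−1)(am+1) < bm+t < t(am+1). Set q = ⌊(m−1)/t⌋ and r = (m−1) mod t. Then the genus of S is g(S) = (qt(t−1) + r(r+1))/(2m) · (am+1) + (qt(q−1) + 2q(r+1))/(2m) · (bm+t) − (m−1)/2; equivalently, g(S) = (qt(t−1)+r(r+1))·a/2 + (qt(q−1)+2q(r+1))·b/2. -/
open Finset

theorem apply_mod_le_of_le_apply_add {α : Type*} [Preorder α] {f : ℕ → α} {m : ℕ}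
    (hf : ∀ s, f s ≤ f (s + m)) (s : ℕ) : f (s % m) ≤ f s := by
  have hmono : Monotone fun k ↦ f (s % m + m * k) :=
    monotone_nat_of_le_succ fun k ↦ by
      simpa only [mul_add_one, add_assoc] using hf (s % m + m * k)
  simpa only [mul_zero, add_zero, Nat.mod_add_div] using hmono (Nat.zero_le (s / m))

theorem mem_gen_triple {n x y z : ℕ} :
    n ∈ gen {x, y, z} ↔ ∃ i j k, i * x + j * y + k * z = n := by
  simp only [gen, ← Submodule.span_nat_eq_addSubmonoidClosure, SetLike.mem_coe,
    Submodule.mem_toAddSubmonoid, Submodule.mem_span_triple, smul_eq_mul]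

theorem nsGenus_eq_sum_range {S : Set ℕ} {m : ℕ} (hm : 0 < m) {κ : ℕ → ℕ}
    (hS : ∀ n, n ∈ S ↔ κ (n % m) ≤ n / m) : nsGenus S = ∑ i ∈ range m, κ i := by
  have : NeZero m := ⟨hm.ne'⟩
  calc nsGenus S
      = Nat.card {p : ℕ × Fin m // p.1 < κ p.2} :=
        Nat.card_congr <| (Nat.divModEquiv m).subtypeEquiv fun n ↦ by
          simp [hS, Nat.divModEquiv]
    _ = Nat.card (Σ i : Fin m, Fin (κ i)) :=
        Nat.card_congr ⟨fun p ↦ ⟨p.1.2, p.1.1, p.2⟩, fun p ↦ ⟨(p.2, p.1), p.2.isLt⟩,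
          fun _ ↦ rfl, fun _ ↦ rfl⟩
    _ = ∑ i ∈ range m, κ i := by
        rw [Nat.card_eq_fintype_card, Fintype.card_sigma, sum_range]
        simp only [Fintype.card_fin]

/-- The cost of paying the amount `s` with as many coins of value `t` as possible and coins of
value `1` for the rest, where a coin of value `1` costs `a` and one of value `t` costs `b`. For a
MANS-semigroup `⟨m, am + 1, bm + t⟩` and `i < m`, the value at `i` is the Kunz coordinate
`⌊w(i) / m⌋`. -/
def greedyCost (a b t s : ℕ) : ℕ := s % t * a + s / t * b

section greedyCost

variable {a b t : ℕ}

theorem greedyCost_of_lt {u : ℕ} (hu : u < t) : greedyCost a b t u = u * a := by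
  simp [greedyCost, Nat.mod_eq_of_lt hu, Nat.div_eq_of_lt hu]

theorem greedyCost_add_mul (ht : 0 < t) (u v : ℕ) :
    greedyCost a b t (u + v * t) = greedyCost a b t u + v * b := by
  rw [greedyCost, greedyCost, Nat.add_mul_mod_self_right, Nat.add_mul_div_right _ _ ht]
  ring

theorem greedyCost_le_mul (hb : b ≤ t * a) (u : ℕ) : greedyCost a b t u ≤ u * a :=
  calc u % t * a + u / t * b ≤ u % t * a + u / t * (t * a) := by gcongr
    _ = (u % t + t * (u / t)) * a := by ring
    _ = u * a := by rw [Nat.mod_add_div]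

theorem greedyCost_add_mul_le (ht : 0 < t) (hb : b ≤ t * a) (u v : ℕ) :
    greedyCost a b t (u + v * t) ≤ u * a + v * b := by
  rw [greedyCost_add_mul ht]
  gcongr
  exact greedyCost_le_mul hb u

theorem greedyCost_le_greedyCost_add {q r : ℕ} (hr : r < t)
    (h : (t - 1 - r) * a ≤ (q + 1) * b) (s : ℕ) :
    greedyCost a b t s ≤ greedyCost a b t (s + (q * t + (r + 1))) := by
  have ht : 0 < t := Nat.zero_lt_of_lt hr
  obtain ⟨u, v, hu, rfl⟩ : ∃ u v, u < t ∧ s = u + v * t :=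
    ⟨s % t, s / t, Nat.mod_lt s ht, (Nat.mod_add_div' s t).symm⟩
  rw [greedyCost_add_mul ht, greedyCost_of_lt hu]
  obtain hlt | hge := lt_or_ge (u + (r + 1)) t
  · have hs : u + v * t + (q * t + (r + 1)) = u + (r + 1) + (v + q) * t := by ring
    rw [hs, greedyCost_add_mul ht, greedyCost_of_lt hlt]
    gcongr <;> exact Nat.le_add_right _ _
  · obtain ⟨k, hk⟩ := Nat.exists_eq_add_of_le hge
    have hs : u + v * t + (q * t + (r + 1)) = k + (v + q + 1) * t := by linarith
    have hu' : u = t - 1 - r + k := by lia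
    calc u * a + v * b = (t - 1 - r) * a + k * a + v * b := by rw [hu', add_mul]
      _ ≤ (q + 1) * b + k * a + v * b := by gcongr
      _ = k * a + (v + q + 1) * b := by ring
      _ = greedyCost a b t (u + v * t + (q * t + (r + 1))) := by
        rw [hs, greedyCost_add_mul ht, greedyCost_of_lt (by lia)]

theorem sum_range_greedyCost_block (q : ℕ) {r : ℕ} (hr : r ≤ t) :
    ∑ i ∈ range r, greedyCost a b t (q * t + i) = r.choose 2 * a + r * (q * b) := by
  have hterm : ∀ i ∈ range r, greedyCost a b t (q * t + i) = i * a + q * b := fun i hi ↦ by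
    have hit : i < t := (mem_range.1 hi).trans_le hr
    rw [add_comm, greedyCost_add_mul (Nat.zero_lt_of_lt hit), greedyCost_of_lt hit]
  rw [sum_congr rfl hterm, sum_add_distrib, ← sum_mul, sum_range_id, ← Nat.choose_two_right,
    sum_const, card_range, smul_eq_mul]

theorem sum_range_mul_greedyCost (q : ℕ) :
    ∑ i ∈ range (q * t), greedyCost a b t i = q * t.choose 2 * a + t * q.choose 2 * b := by
  induction q with
  | zero => simp
  | succ q ih =>
    rw [add_one_mul, sum_range_add, ih, sum_range_greedyCost_block q le_rfl,
      Nat.choose_succ_succ' q 1, Nat.choose_one_right]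
    ring

theorem sum_range_greedyCost (q : ℕ) {r : ℕ} (hr : r ≤ t) :
    ∑ i ∈ range (q * t + r), greedyCost a b t i =
      (q * t.choose 2 + r.choose 2) * a + (t * q.choose 2 + q * r) * b := by
  rw [sum_range_add, sum_range_mul_greedyCost, sum_range_greedyCost_block q hr]
  ring

theorem mem_gen_iff_greedyCost_le {m : ℕ} (hm : 0 < m) (ht : 0 < t) (hb : b ≤ t * a)
    (hf : ∀ s, greedyCost a b t s ≤ greedyCost a b t (s + m)) (n : ℕ) :
    n ∈ gen {m, a * m + 1, b * m + t} ↔ greedyCost a b t (n % m) ≤ n / m := by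
  rw [mem_gen_triple]
  constructor
  · rintro ⟨i, u, v, rfl⟩
    have hn : i * m + u * (a * m + 1) + v * (b * m + t)
        = u + v * t + m * (i + (u * a + v * b)) := by ring
    rw [hn, Nat.add_mul_mod_self_left, Nat.add_mul_div_left _ _ hm]
    calc greedyCost a b t ((u + v * t) % m)
        ≤ greedyCost a b t (u + v * t) := apply_mod_le_of_le_apply_add hf _
      _ ≤ u * a + v * b := greedyCost_add_mul_le ht hb u v
      _ ≤ (u + v * t) / m + (i + (u * a + v * b)) := by lia
  · intro h
    obtain ⟨i, hi⟩ := Nat.exists_eq_add_of_le' h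
    refine ⟨i, n % m % t, n % m / t, ?_⟩
    calc i * m + n % m % t * (a * m + 1) + n % m / t * (b * m + t)
        = (n % m % t + n % m / t * t) + (i + greedyCost a b t (n % m)) * m := by
          rw [greedyCost]; ring
      _ = n := by rw [← hi, Nat.mod_add_div', Nat.mod_add_div']

theorem nsGenus_gen_eq {m q r : ℕ} (hm : m = q * t + (r + 1)) (hr : r < t) (hb : b ≤ t * a)
    (h : (t - 1 - r) * a ≤ (q + 1) * b) :
    nsGenus (gen {m, a * m + 1, b * m + t}) =
      (q * t.choose 2 + (r + 1).choose 2) * a + (t * q.choose 2 + q * (r + 1)) * b := by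
  have hf : ∀ s, greedyCost a b t s ≤ greedyCost a b t (s + m) :=
    hm ▸ greedyCost_le_greedyCost_add hr h
  rw [nsGenus_eq_sum_range (by lia) (mem_gen_iff_greedyCost_le (by lia) (by lia) hb hf), hm,
    sum_range_greedyCost q hr]

end greedyCost

theorem mul_lt_mul_iff_mul_le_mul_of_mul_eq_add {m a b t d e : ℕ} (hm : 0 < m)
    (h : e * t = d + m) : d * (a * m + 1) < e * (b * m + t) ↔ d * a ≤ e * b :=
  calc d * (a * m + 1) < e * (b * m + t)
      ↔ d * a * m + d < (e * b + 1) * m + d := by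
        rw [show d * (a * m + 1) = d * a * m + d by ring,
          show e * (b * m + t) = (e * b + 1) * m + d by linarith]
    _ ↔ d * a * m < (e * b + 1) * m := Nat.add_lt_add_iff_right
    _ ↔ d * a ≤ e * b := by rw [Nat.mul_lt_mul_right hm, Nat.lt_succ_iff]

theorem stmt11_general (m a b t q r : ℕ) (hm : 0 < m)
    (h1 : (t - 1 - r) * (a * m + 1) < (q + 1) * (b * m + t))
    (h2 : b * m + t ≤ t * (a * m + 1))
    (hq : q = (m - 1) / t) (hr : r = (m - 1) % t) :
    (nsGenus (gen {m, a * m + 1, b * m + t}) : ℚ) =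
        ((q : ℚ) * t * ((t : ℚ) - 1) + (r : ℚ) * ((r : ℚ) + 1)) / (2 * (m : ℚ))
          * ((a : ℚ) * m + 1)
      + ((q : ℚ) * t * ((q : ℚ) - 1) + 2 * (q : ℚ) * ((r : ℚ) + 1)) / (2 * (m : ℚ))
          * ((b : ℚ) * m + t)
      - ((m : ℚ) - 1) / 2
    ∧ (nsGenus (gen {m, a * m + 1, b * m + t}) : ℚ) =
        ((q : ℚ) * t * ((t : ℚ) - 1) + (r : ℚ) * ((r : ℚ) + 1)) * (a : ℚ) / 2
      + ((q : ℚ) * t * ((q : ℚ) - 1) + 2 * (q : ℚ) * ((r : ℚ) + 1)) * (b : ℚ) / 2 := by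
  have hpos : 0 < b * m + t := Nat.pos_of_mul_pos_left (Nat.zero_lt_of_lt h1)
  have ht : 0 < t := Nat.pos_of_mul_pos_right (hpos.trans_le h2)
  have hrt : r < t := hr ▸ Nat.mod_lt _ ht
  have hmqr : m = q * t + (r + 1) := by
    rw [← add_assoc, hq, hr, Nat.div_add_mod', Nat.sub_add_cancel hm]
  have hcarry : (t - 1 - r) * a ≤ (q + 1) * b :=
    (mul_lt_mul_iff_mul_le_mul_of_mul_eq_add hm (by rw [add_one_mul]; lia)).1 h1
  have hb : b ≤ t * a := Nat.le_of_mul_le_mul_right (by linarith) hm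
  have hgenus : (nsGenus (gen {m, a * m + 1, b * m + t}) : ℚ) =
        ((q : ℚ) * t * ((t : ℚ) - 1) + (r : ℚ) * ((r : ℚ) + 1)) * (a : ℚ) / 2
      + ((q : ℚ) * t * ((q : ℚ) - 1) + 2 * (q : ℚ) * ((r : ℚ) + 1)) * (b : ℚ) / 2 := by
    rw [nsGenus_gen_eq hmqr hrt hb hcarry]
    push_cast [Nat.cast_choose_two]
    ring
  refine ⟨?_, hgenus⟩
  have hm0 : (m : ℚ) ≠ 0 := Nat.cast_ne_zero.2 hm.ne'
  have hmqr' : (m : ℚ) = q * t + (r + 1) := mod_cast hmqr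
  rw [hgenus]
  field_simp
  rw [hmqr']
  ring

theorem stmt11 (m a b t q r : ℕ) (hm : 3 ≤ m) (ha : 1 ≤ a) (ht2 : 2 ≤ t) (htm : t ≤ m - 1)
    (h1 : (t - 1) * (a * m + 1) < b * m + t) (h2 : b * m + t < t * (a * m + 1))
    (hq : q = (m - 1) / t) (hr : r = (m - 1) % t) :
    (nsGenus (gen {m, a * m + 1, b * m + t}) : ℚ) =
        ((q : ℚ) * t * ((t : ℚ) - 1) + (r : ℚ) * ((r : ℚ) + 1)) / (2 * (m : ℚ))
          * ((a : ℚ) * m + 1)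
      + ((q : ℚ) * t * ((q : ℚ) - 1) + 2 * (q : ℚ) * ((r : ℚ) + 1)) / (2 * (m : ℚ))
          * ((b : ℚ) * m + t)
      - ((m : ℚ) - 1) / 2
    ∧ (nsGenus (gen {m, a * m + 1, b * m + t}) : ℚ) =
        ((q : ℚ) * t * ((t : ℚ) - 1) + (r : ℚ) * ((r : ℚ) + 1)) * (a : ℚ) / 2
      + ((q : ℚ) * t * ((q : ℚ) - 1) + 2 * (q : ℚ) * ((r : ℚ) + 1)) * (b : ℚ) / 2 := by
  have h1' := (Nat.mul_le_mul_right _ (Nat.sub_le (t - 1) r)).trans_lt h1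
  exact stmt11_general m a b t q r (by lia) (h1'.trans_le (Nat.le_mul_of_pos_left _ q.succ_pos))
    h2.le hq hr
end
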